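/- Let F : S → G(S) be a Markov chain on a measurable space S and let A, B ⊆ S be measurable. If there exists a lexicographic generalised Streett supermartingale for (F, A, B), then ℙ_{s₀}[Streett(A,B)] = 1 for every initial state s₀ ∈ S. -/

import Mathlib

open MeasureTheory ProbabilityTheory Set
open scoped ENNReal NNReal

variable {S : Type*} [MeasurableSpace S]

/-- Prepend an initial state to a trace. -/
def prep (s₀ : S) (ω : ℕ → S) : ℕ → S := fun n => Nat.rec s₀ (fun k _ => ω k) n

/-- The Streett condition for the pair `(A, B)`: either `A` is visited only
finitely often, or `B` is visited infinitely often. -/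
def streett (A B : Set S) : Set (ℕ → S) :=
  {ω | {i : ℕ | ω i ∈ A}.Finite ∨ {i : ℕ | ω i ∈ B}.Infinite}

/-- The strict lexicographic supermartingale ordering on `[0,∞]^m`:
`r ≻ r'` iff there is a level `l` with `r i ≥ r' i` for all `i < l` and
`r l ≥ 1 + r' l`. -/
def lexGT {m : ℕ} (r r' : Fin m → ℝ≥0∞) : Prop :=
  ∃ l : Fin m, (∀ i < l, r' i ≤ r i) ∧ r' l + 1 ≤ r l

/-- The non-strict lexicographic supermartingale ordering: the union of `≻` with
the componentwise order. -/
def lexGE {m : ℕ} (r r' : Fin m → ℝ≥0∞) : Prop :=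
  lexGT r r' ∨ ∀ i, r' i ≤ r i

/-- The next-time operator applied componentwise: `(𝕏 r)(s) = ∫ r dF(s)`. -/
noncomputable def nextTimeV (F : Kernel S S) {m : ℕ} (r : S → Fin m → ℝ≥0∞) :
    S → Fin m → ℝ≥0∞ :=
  fun s i => ∫⁻ y, r y i ∂(F s)

/-- A lexicographic generalised Streett supermartingale (LexGSSM) for `(F, A, B)`:
a measurable `[0,∞)^m`-valued function `r` with `(𝕏 r)(x) ≺ r(x)` on `A ∖ B` and
`(𝕏 r)(x) ⪯ r(x)` outside `A ∪ B`. -/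
def IsLexGSSM (F : Kernel S S) (A B : Set S) {m : ℕ} (r : S → Fin m → ℝ≥0∞) : Prop :=
  (∀ i, Measurable fun x => r x i) ∧ (∀ x i, r x i ≠ ⊤) ∧
    (∀ x ∈ A \ B, lexGT (r x) (nextTimeV F r x)) ∧
    (∀ x ∉ A ∪ B, lexGE (r x) (nextTimeV F r x))

/-!
If `f : S → [0,∞)` satisfies `𝕏 f ≤ f` on `G` and `𝕏 f + 1 ≤ f` on `D`, then from any state `s` the
expected number of visits to `D` before leaving `G` is at most `f s`. By Borel–Cantelli and the
Markov property, almost surely a trace that eventually stays in `G` visits `D` only finitely often.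

On a trace that violates the Streett condition, `𝕏 r ⪯ r` eventually and `𝕏 r ≺ r` infinitely often.
Let `l` be the least level at which the strict decrease happens infinitely often. Levels below `l`
are eventually never the strict ones, so `𝕏 r_l ≤ r_l` eventually, while `𝕏 r_l + 1 ≤ r_l`
infinitely often. Taking `f = r_l` above, such traces form a null set.
-/

open Filter

section Traces

variable {α : Type*} {A B : Set α} {ω : ℕ → α}

lemma mem_streett_iff_frequently_imp_frequently :
    ω ∈ streett A B ↔ (∃ᶠ i in atTop, ω i ∈ A) → ∃ᶠ i in atTop, ω i ∈ B := by
  simp only [streett, mem_ofPred_eq, Nat.frequently_atTop_iff_infinite, imp_iff_not_or,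
    not_infinite]

lemma frequently_prep_mem_iff (s : α) :
    (∃ᶠ i in atTop, prep s ω i ∈ A) ↔ ∃ᶠ i in atTop, ω i ∈ A := by
  conv_lhs => rw [← map_add_atTop_eq_nat 1, frequently_map]
  rfl

lemma prep_mem_streett_iff (s : α) : prep s ω ∈ streett A B ↔ ω ∈ streett A B := by
  simp only [mem_streett_iff_frequently_imp_frequently, frequently_prep_mem_iff]

lemma measurable_uncurry_prep : Measurable fun p : S × (ℕ → S) => prep p.1 p.2 := by
  refine measurable_pi_lambda _ fun n => ?_
  cases n with
  | zero => exact measurable_fst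
  | succ n => exact (measurable_pi_apply n).comp measurable_snd

lemma measurable_prep (s : S) : Measurable (prep s) :=
  measurable_uncurry_prep.comp measurable_prodMk_left

end Traces

/-- `Q s` is the law of the trace of the Markov chain `F` started at `s`, with `s` itself as
the state at time `0`. The Markov property at time `1` is taken as the definition. -/
def IsTraceKernel (F : Kernel S S) (Q : Kernel S (ℕ → S)) : Prop :=
  ∀ s, Q s = (Q ∘ₘ F s).map (prep s)

/-- The kernel that puts the initial state in front of a trace drawn from `P`. It turns a law
`P s` of the states after `s`, as in `LexGSSM_implies_streett_as`, into a law of traces that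
start at `s`. -/
noncomputable def prepKernel (P : Kernel S (ℕ → S)) : Kernel S (ℕ → S) :=
  (Kernel.id ×ₖ P).map fun p => prep p.1 p.2

section PrepKernel

variable (P : Kernel S (ℕ → S))

instance [IsMarkovKernel P] : IsMarkovKernel (prepKernel P) :=
  Kernel.IsMarkovKernel.map _ measurable_uncurry_prep

lemma prepKernel_apply [IsSFiniteKernel P] (s : S) : prepKernel P s = (P s).map (prep s) := by
  rw [prepKernel, Kernel.map_apply _ measurable_uncurry_prep, Kernel.prod_apply, Kernel.id_apply,
    Measure.dirac_prod, Measure.map_map measurable_uncurry_prep measurable_prodMk_left]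
  rfl

lemma isTraceKernel_prepKernel [IsSFiniteKernel P] {F : Kernel S S}
    (hP : ∀ s₀, P s₀ = (F s₀).bind fun s₁ => (P s₁).map (prep s₁)) :
    IsTraceKernel F (prepKernel P) := by
  intro s
  rw [prepKernel_apply, hP s, ← funext (prepKernel_apply P)]

end PrepKernel

namespace IsTraceKernel

variable {F : Kernel S S} {Q : Kernel S (ℕ → S)}

lemma measure_eq_lintegral (hQ : IsTraceKernel F Q) (s : S) {E : Set (ℕ → S)}
    (hE : MeasurableSet E) : Q s E = ∫⁻ y, Q y (prep s ⁻¹' E) ∂(F s) := by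
  have hpre : MeasurableSet (prep s ⁻¹' E) := measurable_prep s hE
  rw [hQ s, Measure.map_apply (measurable_prep s) hE, Measure.bind_apply hpre Q.aemeasurable]

lemma ae_shift (hQ : IsTraceKernel F Q) {p : (ℕ → S) → Prop} (hp : MeasurableSet {ω | p ω})
    (h : ∀ s, ∀ᵐ ω ∂(Q s), p ω) (N : ℕ) : ∀ s, ∀ᵐ ω ∂(Q s), p fun k => ω (k + N) := by
  have hpN (N : ℕ) : MeasurableSet {ω : ℕ → S | p fun k => ω (k + N)} :=
    (measurable_pi_lambda _ fun k => measurable_pi_apply (k + N) :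
      Measurable fun (ω : ℕ → S) k => ω (k + N)) hp
  induction N with
  | zero => exact h
  | succ N ih =>
    intro s
    rw [hQ s, ae_map_iff (measurable_prep s).aemeasurable (hpN (N + 1))]
    exact Measure.ae_comp_of_ae_ae (hpN N) (ae_of_all _ ih)

end IsTraceKernel

/-- The event that a trace is in `D` at time `n` and has not left `G` up to that time. -/
def visitWithin (G D : Set S) (n : ℕ) : Set (ℕ → S) :=
  {ω | (∀ i ≤ n, ω i ∈ G) ∧ ω n ∈ D}

section VisitWithin

variable {α : Type*} {G D : Set α}

lemma prep_preimage_visitWithin_of_notMem {s : α} (hs : s ∉ G) (n : ℕ) :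
    prep s ⁻¹' visitWithin G D n = ∅ :=
  eq_empty_of_forall_notMem fun _ hω => hs (hω.1 0 n.zero_le)

lemma prep_preimage_visitWithin_zero_of_notMem {s : α} (hs : s ∉ D) :
    prep s ⁻¹' visitWithin G D 0 = ∅ :=
  eq_empty_of_forall_notMem fun _ hω => hs hω.2

lemma prep_preimage_visitWithin_succ {s : α} (hs : s ∈ G) (n : ℕ) :
    prep s ⁻¹' visitWithin G D (n + 1) = visitWithin G D n := by
  ext ω
  refine and_congr_left fun _ => ⟨fun h i hi => h (i + 1) (by lia), fun h i hi => ?_⟩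
  cases i with
  | zero => exact hs
  | succ i => exact h i (by lia)

end VisitWithin

lemma measurableSet_visitWithin {G D : Set S} (hG : MeasurableSet G) (hD : MeasurableSet D)
    (n : ℕ) : MeasurableSet (visitWithin G D n) := by
  simp only [visitWithin, measurableSet_setOfPred]
  exact (Measurable.forall fun i => measurable_const.imp (hG.mem.comp (measurable_pi_apply i))).and
    (hD.mem.comp (measurable_pi_apply n))

namespace IsTraceKernel

variable {F : Kernel S S} {Q : Kernel S (ℕ → S)} {G D : Set S} {f : S → ℝ≥0∞}

lemma sum_measure_visitWithin_le [IsMarkovKernel Q] (hQ : IsTraceKernel F Q)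
    (hG : MeasurableSet G) (hD : MeasurableSet D) (hfG : ∀ x ∈ G, ∫⁻ y, f y ∂(F x) ≤ f x)
    (hfD : ∀ x ∈ D, ∫⁻ y, f y ∂(F x) + 1 ≤ f x) (N : ℕ) (s : S) :
    ∑ n ∈ Finset.range N, Q s (visitWithin G D n) ≤ f s := by
  have hE (n : ℕ) : MeasurableSet (visitWithin G D n) := measurableSet_visitWithin hG hD n
  induction N generalizing s with
  | zero => simp
  | succ N ih =>
    by_cases hsG : s ∈ G
    · have later_visits :
          ∑ n ∈ Finset.range N, Q s (visitWithin G D (n + 1)) ≤ ∫⁻ y, f y ∂(F s) :=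
        calc ∑ n ∈ Finset.range N, Q s (visitWithin G D (n + 1))
          _ = ∑ n ∈ Finset.range N, ∫⁻ y, Q y (visitWithin G D n) ∂(F s) := by
            simp only [hQ.measure_eq_lintegral s (hE _), prep_preimage_visitWithin_succ hsG]
          _ = ∫⁻ y, ∑ n ∈ Finset.range N, Q y (visitWithin G D n) ∂(F s) :=
            (lintegral_finsetSum _ fun n _ => Q.measurable_coe (hE n)).symm
          _ ≤ ∫⁻ y, f y ∂(F s) := lintegral_mono ih
      rw [Finset.sum_range_succ']
      by_cases hsD : s ∈ D
      · exact (add_le_add later_visits prob_le_one).trans (hfD s hsD)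
      · rw [hQ.measure_eq_lintegral s (hE 0), prep_preimage_visitWithin_zero_of_notMem hsD]
        simpa using later_visits.trans (hfG s hsG)
    · simp [hQ.measure_eq_lintegral s (hE _), prep_preimage_visitWithin_of_notMem hsG]

lemma ae_eventually_notMem_visitWithin [IsMarkovKernel Q] (hQ : IsTraceKernel F Q)
    (hG : MeasurableSet G) (hD : MeasurableSet D) (hf : ∀ x, f x ≠ ∞)
    (hfG : ∀ x ∈ G, ∫⁻ y, f y ∂(F x) ≤ f x) (hfD : ∀ x ∈ D, ∫⁻ y, f y ∂(F x) + 1 ≤ f x) (s : S) :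
    ∀ᵐ ω ∂(Q s), ∀ᶠ n in atTop, ω ∉ visitWithin G D n :=
  ae_eventually_notMem <| ne_top_of_le_ne_top (hf s) <|
    ENNReal.tsum_le_of_sum_range_le fun N => hQ.sum_measure_visitWithin_le hG hD hfG hfD N s

lemma ae_eventually_notMem_of_eventually_mem [IsMarkovKernel Q] (hQ : IsTraceKernel F Q)
    (hG : MeasurableSet G) (hD : MeasurableSet D) (hf : ∀ x, f x ≠ ∞)
    (hfG : ∀ x ∈ G, ∫⁻ y, f y ∂(F x) ≤ f x) (hfD : ∀ x ∈ D, ∫⁻ y, f y ∂(F x) + 1 ≤ f x) (s : S) :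
    ∀ᵐ ω ∂(Q s), (∀ᶠ i in atTop, ω i ∈ G) → ∀ᶠ i in atTop, ω i ∉ D := by
  have hmeas : MeasurableSet {ω : ℕ → S | ∀ᶠ n in atTop, ω ∉ visitWithin G D n} := by
    convert MeasurableSet.measurableSet_liminf fun n => (measurableSet_visitWithin hG hD n).compl
    ext ω
    simp only [mem_ofPred_eq, mem_liminf_iff_eventually_mem, mem_compl_iff]
  have hshift := hQ.ae_shift hmeas (hQ.ae_eventually_notMem_visitWithin hG hD hf hfG hfD)
  filter_upwards [ae_all_iff.2 fun N => hshift N s] with ω hω hωG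
  obtain ⟨N, hN⟩ := eventually_atTop.1 hωG
  rw [← map_add_atTop_eq_nat N, eventually_map]
  filter_upwards [hω N] with n hn hnD
  exact hn ⟨fun i _ => hN _ (by lia), hnD⟩

lemma ae_eventually_not_add_one_le_of_eventually_le [IsMarkovKernel Q] (hQ : IsTraceKernel F Q)
    (hfm : Measurable f) (hf : ∀ x, f x ≠ ∞) (s : S) :
    ∀ᵐ ω ∂(Q s), (∀ᶠ i in atTop, ∫⁻ y, f y ∂(F (ω i)) ≤ f (ω i)) →
      ∀ᶠ i in atTop, ¬ ∫⁻ y, f y ∂(F (ω i)) + 1 ≤ f (ω i) := by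
  have hXf : Measurable fun x => ∫⁻ y, f y ∂(F x) := hfm.lintegral_kernel
  exact hQ.ae_eventually_notMem_of_eventually_mem (measurableSet_le hXf hfm)
    (measurableSet_le (hXf.add_const 1) hfm) hf (fun _ hx => hx) (fun _ hx => hx) s

end IsTraceKernel

lemma exists_eventually_le_and_frequently_add_one_le_of_lex {ι : Type*} {L : Filter ι} {m : ℕ}
    {r r' : ι → Fin m → ℝ≥0∞} (hge : ∀ᶠ i in L, lexGE (r i) (r' i))
    (hgt : ∃ᶠ i in L, lexGT (r i) (r' i)) :
    ∃ l, (∀ᶠ i in L, r' i l ≤ r i l) ∧ ∃ᶠ i in L, r' i l + 1 ≤ r i l := by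
  let strictAt (l : Fin m) (i : ι) : Prop := (∀ j < l, r' i j ≤ r i j) ∧ r' i l + 1 ≤ r i l
  obtain ⟨l, hl, hmin⟩ : ∃ l, Minimal (fun l => ∃ᶠ i in L, strictAt l i) l :=
    exists_minimal_of_wellFoundedLT _ (frequently_exists.1 hgt)
  have never_strict_below : ∀ᶠ i in L, ∀ j < l, ¬ strictAt j i :=
    eventually_all.2 fun j => eventually_imp_distrib_left.2 fun hj =>
      not_frequently.1 fun hfreq => (hmin hfreq hj.le).not_gt hj
  refine ⟨l, ?_, hl.mono fun _ h => h.2⟩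
  filter_upwards [hge, never_strict_below] with i hi hbelow
  rcases hi with ⟨k, hk⟩ | hle
  · rcases (not_lt.1 fun hkl => hbelow k hkl hk : l ≤ k).lt_or_eq with hlk | rfl
    · exact hk.1 l hlk
    · exact le_self_add.trans hk.2
  · exact hle l

namespace IsLexGSSM

variable {F : Kernel S S} {A B : Set S} {m : ℕ} {r : S → Fin m → ℝ≥0∞}

lemma lexGE_of_notMem (hr : IsLexGSSM F A B r) {x : S} (hx : x ∉ B) :
    lexGE (r x) (nextTimeV F r x) := by
  by_cases hxA : x ∈ A
  · exact Or.inl (hr.2.2.1 x ⟨hxA, hx⟩)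
  · exact hr.2.2.2 x (by simp [hxA, hx])

lemma exists_eventually_le_and_frequently_add_one_le (hr : IsLexGSSM F A B r) {ω : ℕ → S}
    (hω : ω ∉ streett A B) :
    ∃ l, (∀ᶠ i in atTop, nextTimeV F r (ω i) l ≤ r (ω i) l) ∧
      ∃ᶠ i in atTop, nextTimeV F r (ω i) l + 1 ≤ r (ω i) l := by
  rw [mem_streett_iff_frequently_imp_frequently, Classical.not_imp, not_frequently] at hω
  obtain ⟨hA, hB⟩ := hω
  exact exists_eventually_le_and_frequently_add_one_le_of_lex
    (hB.mono fun _ => hr.lexGE_of_notMem)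
    ((hA.and_eventually hB).mono fun i => hr.2.2.1 (ω i))

lemma ae_mem_streett (hr : IsLexGSSM F A B r) {Q : Kernel S (ℕ → S)} [IsMarkovKernel Q]
    (hQ : IsTraceKernel F Q) (s : S) : ∀ᵐ ω ∂(Q s), ω ∈ streett A B := by
  have hlevel (l : Fin m) := hQ.ae_eventually_not_add_one_le_of_eventually_le (hr.1 l)
    (fun x => hr.2.1 x l) s
  filter_upwards [ae_all_iff.2 hlevel] with ω hω
  by_contra hbad
  obtain ⟨l, hle, hstrict⟩ := hr.exists_eventually_le_and_frequently_add_one_le hbad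
  exact hstrict (hω l hle)

end IsLexGSSM

theorem LexGSSM_implies_streett_as_general
    (F : Kernel S S) (P : Kernel S (ℕ → S)) [IsMarkovKernel P]
    (hP : ∀ s₀ : S, (P s₀ : Measure (ℕ → S)) = (F s₀).bind fun s₁ => (P s₁).map (prep s₁))
    (A B : Set S) (hLex : ∃ (m : ℕ) (r : S → Fin m → ℝ≥0∞), IsLexGSSM F A B r) :
    ∀ s₀ : S, ∀ᵐ ω ∂(P s₀), ω ∈ streett A B := by
  obtain ⟨m, r, hr⟩ := hLex
  intro s₀
  have hQ : ∀ᵐ ω ∂((P s₀).map (prep s₀)), ω ∈ streett A B := by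
    rw [← prepKernel_apply]
    exact hr.ae_mem_streett (isTraceKernel_prepKernel P hP) s₀
  filter_upwards [ae_of_ae_map (measurable_prep s₀).aemeasurable hQ] with ω hω
  exact (prep_mem_streett_iff s₀).1 hω

/-- If a lexicographic generalised Streett supermartingale exists for `(F, A, B)`,
then the Streett condition for `(A, B)` holds almost surely from every initial
state. -/
theorem LexGSSM_implies_streett_as
    (F : Kernel S S) [IsMarkovKernel F]
    (P : Kernel S (ℕ → S)) [IsMarkovKernel P]
    (hP : ∀ s₀ : S, (P s₀ : Measure (ℕ → S)) = (F s₀).bind fun s₁ => (P s₁).map (prep s₁))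
    (A B : Set S) (hA : MeasurableSet A) (hB : MeasurableSet B)
    (hLex : ∃ (m : ℕ) (r : S → Fin m → ℝ≥0∞), IsLexGSSM F A B r) :
    ∀ s₀ : S, P s₀ (streett A B) = 1 := by
  intro s₀
  have hae := LexGSSM_implies_streett_as_general F P hP A B hLex s₀
  exact (measure_congr (eventuallyEq_univ.2 hae)).trans measure_univ
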